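/- arXiv:math/0308046 — 7 statements merged into one kernel-verified Lean document; each statement's English description precedes it below -/
import Mathlib

section
/- Let f and f' be two distinct rational sections of L_D, of degrees h = deg_D(f) and h' = deg_D(f'). Then the multiplicity m(P) of P as a solution of f = f' is zero for all but finitely many P ∈ I, and the total multiplicity satisfies Σ_{P ∈ I} m(P) = h + h'. -/
/-!
Put `A = v P f + d P`, `B = v P f' + d P` and `C = v P (f - f') + d P`. At every `P`,
`m P = (C - A - B) + max 0 A + max 0 B`.
If `A, B ≥ 0` then `m P = C`; if `A, B < 0` then `m P = C - A - B`, because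
`a⁻¹ - b⁻¹ = (b - a) / (a b)`; and if exactly one of them is negative, then `A ≠ B`, so
`C = min A B` by the ultrametric inequality and both sides vanish. Summing over `P`, the sum
formula for `f - f'`, `f`, `f'` together with `∑ d P = 0` removes the first term.
-/

section Valuation

variable {K : Type*} [Field K] {w : K → ℤ}

theorem val_neg (hmul : ∀ x y : K, x ≠ 0 → y ≠ 0 → w (x * y) = w x + w y)
    {x : K} (hx : x ≠ 0) : w (-x) = w x := by
  have h1 := hmul 1 1 one_ne_zero one_ne_zero
  have h2 := hmul (-1) (-1) (neg_ne_zero.2 one_ne_zero) (neg_ne_zero.2 one_ne_zero)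
  have h3 := hmul (-1) x (neg_ne_zero.2 one_ne_zero) hx
  rw [mul_one] at h1
  rw [neg_mul_neg, mul_one] at h2
  rw [neg_one_mul] at h3
  omega

/-- The smaller of two distinct valuations is the valuation of the difference. -/
theorem val_sub_of_lt (hmul : ∀ x y : K, x ≠ 0 → y ≠ 0 → w (x * y) = w x + w y)
    (hadd : ∀ x y : K, x ≠ 0 → y ≠ 0 → x + y ≠ 0 → min (w x) (w y) ≤ w (x + y))
    {x y : K} (hx : x ≠ 0) (hy : y ≠ 0) (hxy : x ≠ y) (hlt : w x < w y) :
    w (x - y) = w x := by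
  have hs : x - y ≠ 0 := sub_ne_zero.2 hxy
  have h1 := hadd x (-y) hx (neg_ne_zero.2 hy) (by rwa [← sub_eq_add_neg])
  rw [← sub_eq_add_neg, val_neg hmul hy] at h1
  have h2 := hadd (x - y) y hs hy (by simpa using hx)
  rw [sub_add_cancel] at h2
  omega

/-- The local multiplicity formula; `c` is the value `φ_P` of the trivialization. -/
theorem local_mult (hmul : ∀ x y : K, x ≠ 0 → y ≠ 0 → w (x * y) = w x + w y)
    (hadd : ∀ x y : K, x ≠ 0 → y ≠ 0 → x + y ≠ 0 → min (w x) (w y) ≤ w (x + y))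
    {c f f' : K} (hc : c ≠ 0) (hf : f ≠ 0) (hf' : f' ≠ 0) (hne : f ≠ f') :
    (if 0 ≤ w (c * f) ∧ 0 ≤ w (c * f') then w (c * f - c * f')
      else if w (c * f) < 0 ∧ w (c * f') < 0 then w ((c * f)⁻¹ - (c * f')⁻¹)
      else 0) =
    (w (f - f') - w f - w f' - w c) + (max 0 (w f + w c) + max 0 (w f' + w c)) := by
  have hs : f - f' ≠ 0 := sub_ne_zero.2 hne
  have hA := hmul c f hc hf
  have hB := hmul c f' hc hf'
  have hC := hmul c (f - f') hc hs
  have ha : c * f ≠ 0 := mul_ne_zero hc hf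
  have hb : c * f' ≠ 0 := mul_ne_zero hc hf'
  have hab : c * f ≠ c * f' := fun h => hne (mul_left_cancel₀ hc h)
  have hI : w ((c * f)⁻¹ - (c * f')⁻¹) + (w (c * f) + w (c * f')) = w (c * f - c * f') := by
    have hi : (c * f)⁻¹ - (c * f')⁻¹ ≠ 0 := sub_ne_zero.2 fun h => hab (inv_injective h)
    rw [← hmul _ _ ha hb, ← hmul _ _ hi (mul_ne_zero ha hb),
      ← val_neg hmul (sub_ne_zero.2 hab)]
    congr 1
    field_simp
    ring
  have hlt := val_sub_of_lt hmul hadd hf hf' hne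
  have hgt := val_sub_of_lt hmul hadd hf' hf hne.symm
  rw [← neg_sub f f', val_neg hmul hs] at hgt
  rw [mul_sub] at hC
  split_ifs <;> omega

end Valuation

/-- Let `K` be a field, `I` an index set, `v P` a discrete
valuation at each `P ∈ I` (presented here by its restriction to nonzero
elements, with values in `ℤ`), satisfying the sum formula.  Let `D = (d P)` be
a degree-zero divisor with finite support, and `φ P` elements with
`v P (φ P) = d P`.  For distinct rational sections `f, f'` of `L_D` (i.e.
distinct nonzero elements of `K`), the multiplicity `m P` of `P` as a solution
of `f = f'` is zero for all but finitely many `P`, and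
`∑ P, m P = deg_D f + deg_D f'`, where `deg_D f = ∑ P, max 0 (v P f + d P)`. -/
theorem stmt_0 {K : Type*} [Field K] {I : Type*}
    (v : I → K → ℤ)
    (hmul : ∀ P : I, ∀ x y : K, x ≠ 0 → y ≠ 0 → v P (x * y) = v P x + v P y)
    (hadd : ∀ P : I, ∀ x y : K, x ≠ 0 → y ≠ 0 → x + y ≠ 0 →
      min (v P x) (v P y) ≤ v P (x + y))
    (hsum : ∀ g : K, g ≠ 0 → {P : I | v P g ≠ 0}.Finite ∧ ∑ᶠ P : I, v P g = 0)
    (d : I → ℤ) (hdfin : {P : I | d P ≠ 0}.Finite) (hdsum : ∑ᶠ P : I, d P = 0)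
    (φ : I → K) (hφ : ∀ P : I, φ P ≠ 0) (hφv : ∀ P : I, v P (φ P) = d P)
    (f f' : K) (hf : f ≠ 0) (hf' : f' ≠ 0) (hne : f ≠ f')
    (m : I → ℤ)
    (hm : ∀ P : I, m P =
      if 0 ≤ v P (φ P * f) ∧ 0 ≤ v P (φ P * f') then v P (φ P * f - φ P * f')
      else if v P (φ P * f) < 0 ∧ v P (φ P * f') < 0 then
        v P ((φ P * f)⁻¹ - (φ P * f')⁻¹)
      else 0) :
    {P : I | m P ≠ 0}.Finite ∧
      ∑ᶠ P : I, m P =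
        (∑ᶠ P : I, max 0 (v P f + d P)) + (∑ᶠ P : I, max 0 (v P f' + d P)) := by
  have hs : f - f' ≠ 0 := sub_ne_zero.2 hne
  obtain ⟨hfs, hs0⟩ := hsum _ hs
  obtain ⟨hff, hf0⟩ := hsum _ hf
  obtain ⟨hff', hf0'⟩ := hsum _ hf'
  have key : ∀ P, m P = (v P (f - f') - v P f - v P f' - d P) +
      (max 0 (v P f + d P) + max 0 (v P f' + d P)) := fun P => by
    rw [hm, local_mult (hmul P) (hadd P) (hφ P) hf hf' hne, hφv]
  have hmax : (Function.support fun P => max 0 (v P f + d P)).Finite :=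
    (hff.union hdfin).subset fun P hP => by
      simp only [Function.mem_support, Set.mem_union, Set.mem_ofPred_eq] at *
      omega
  have hmax' : (Function.support fun P => max 0 (v P f' + d P)).Finite :=
    (hff'.union hdfin).subset fun P hP => by
      simp only [Function.mem_support, Set.mem_union, Set.mem_ofPred_eq] at *
      omega
  have h1 : (Function.support fun P => v P (f - f') - v P f).Finite :=
    (hfs.union hff).subset fun P hP => by
      simp only [Function.mem_support, Set.mem_union, Set.mem_ofPred_eq] at *
      omega
  have h2 : (Function.support fun P => v P (f - f') - v P f - v P f').Finite :=
    (h1.union hff').subset fun P hP => by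
      simp only [Function.mem_support, Set.mem_union, Set.mem_ofPred_eq] at *
      omega
  have h3 : (Function.support fun P => v P (f - f') - v P f - v P f' - d P).Finite :=
    (h2.union hdfin).subset fun P hP => by
      simp only [Function.mem_support, Set.mem_union, Set.mem_ofPred_eq] at *
      omega
  have h4 : (Function.support fun P =>
      max 0 (v P f + d P) + max 0 (v P f' + d P)).Finite :=
    (hmax.union hmax').subset fun P hP => by
      simp only [Function.mem_support, Set.mem_union] at *
      omega
  constructor
  · refine (h3.union h4).subset fun P hP => ?_
    have := key P
    simp only [Function.mem_support, Set.mem_union, Set.mem_ofPred_eq] at *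
    omega
  · rw [finsum_congr key, finsum_add_distrib h3 h4, finsum_add_distrib hmax hmax',
      finsum_sub_distrib h2 hdfin, finsum_sub_distrib h1 hff', finsum_sub_distrib hfs hff,
      hs0, hf0, hf0', hdsum]
    ring
end

section
/- Let P_1, …, P_N ∈ I be N distinct indices, let h and a be natural numbers, and let f, f' be two distinct rational sections of L_D with deg_D(f) ≤ h and deg_D(f') ≤ h. If the number of indices j ∈ {1, …, N} with m(P_j) ≥ 1 is at least a, then the number of indices j with m(P_j) = 1 (value agreement of exact multiplicity one) is at least 2a − 2h. -/
/-!
Put `A = v_P(f) + d_P`, `B = v_P(f') + d_P` and `C = v_P(f - f') + d_P`. The multiplicity is `C` if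
`A, B ≥ 0`, it is `C - A - B` if `A, B < 0`, and it is `0` otherwise; in every case
`0 ≤ m ≤ C + max(0, -A) + max(0, -B) = C - A - B + max(0, A) + max(0, B)`
(`multiplicity_bounds`). By the sum formula and `deg D = 0`, each of `A`, `B`, `C` sums to zero
over all indices, so the total multiplicity is at most `deg_D f + deg_D f' ≤ 2h`. Every solution
of multiplicity other than one counts at least twice in this total, so
`2 #{m ≥ 1} - #{m = 1} ≤ ∑ m ≤ 2h`.
-/

section Valuation

variable {K : Type*} [Field K] {w : K → ℤ}

theorem val_one (hmul : ∀ x y : K, x ≠ 0 → y ≠ 0 → w (x * y) = w x + w y) : w 1 = 0 := by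
  have h := hmul 1 1 one_ne_zero one_ne_zero
  rw [mul_one] at h
  omega

theorem val_inv (hmul : ∀ x y : K, x ≠ 0 → y ≠ 0 → w (x * y) = w x + w y)
    {x : K} (hx : x ≠ 0) : w x⁻¹ = -w x := by
  have h := hmul x x⁻¹ hx (inv_ne_zero hx)
  rw [mul_inv_cancel₀ hx, val_one hmul] at h
  omega

theorem val_inv_sub_inv (hmul : ∀ x y : K, x ≠ 0 → y ≠ 0 → w (x * y) = w x + w y)
    {x y : K} (hx : x ≠ 0) (hy : y ≠ 0) (hxy : x ≠ y) :
    w (x⁻¹ - y⁻¹) = w (x - y) - w x - w y := by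
  have hs : x - y ≠ 0 := sub_ne_zero.mpr hxy
  have e : x⁻¹ - y⁻¹ = -((x - y) * (x⁻¹ * y⁻¹)) := by
    field_simp
    ring
  have hi : x⁻¹ * y⁻¹ ≠ 0 := mul_ne_zero (inv_ne_zero hx) (inv_ne_zero hy)
  rw [e, val_neg hmul (mul_ne_zero hs hi), hmul _ _ hs hi,
    hmul _ _ (inv_ne_zero hx) (inv_ne_zero hy), val_inv hmul hx, val_inv hmul hy]
  ring

/-- The local estimate: `x` and `y` are the two sections in a trivialization at one index, and the
middle expression is their multiplicity of agreement there. The upper bound is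
`w (x - y) + max 0 (-w x) + max 0 (-w y)`, written so that its sum over all indices is visible. -/
theorem multiplicity_bounds (hmul : ∀ x y : K, x ≠ 0 → y ≠ 0 → w (x * y) = w x + w y)
    (hadd : ∀ x y : K, x ≠ 0 → y ≠ 0 → x + y ≠ 0 → min (w x) (w y) ≤ w (x + y))
    {x y : K} (hx : x ≠ 0) (hy : y ≠ 0) (hxy : x ≠ y) {k : ℤ}
    (hk : k = if 0 ≤ w x ∧ 0 ≤ w y then w (x - y)
      else if w x < 0 ∧ w y < 0 then w (x⁻¹ - y⁻¹) else 0) :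
    0 ≤ k ∧ k ≤ w (x - y) - w x - w y + max 0 (w x) + max 0 (w y) := by
  have h := hadd x (-y) hx (neg_ne_zero.mpr hy)
    (by rw [← sub_eq_add_neg]; exact sub_ne_zero.mpr hxy)
  rw [← sub_eq_add_neg, val_neg hmul hy] at h
  rw [val_inv_sub_inv hmul hx hy hxy] at hk
  split_ifs at hk <;> omega

end Valuation

/-- With the setup of valuations, divisor `D`, and
multiplicities `m` as before, let `P : Fin N → I` enumerate `N` distinct
indices, let `h, a` be natural numbers, and let `f, f'` be distinct rational
sections of `L_D` with `deg_D f ≤ h` and `deg_D f' ≤ h`.  If the number of `j`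
with `m (P j) ≥ 1` is at least `a`, then the number of `j` with `m (P j) = 1`
is at least `2a - 2h`. -/
theorem stmt_3 {K : Type*} [Field K] {I : Type*}
    (v : I → K → ℤ)
    (hmul : ∀ P : I, ∀ x y : K, x ≠ 0 → y ≠ 0 → v P (x * y) = v P x + v P y)
    (hadd : ∀ P : I, ∀ x y : K, x ≠ 0 → y ≠ 0 → x + y ≠ 0 →
      min (v P x) (v P y) ≤ v P (x + y))
    (hsum : ∀ g : K, g ≠ 0 → {P : I | v P g ≠ 0}.Finite ∧ ∑ᶠ P : I, v P g = 0)
    (d : I → ℤ) (hdfin : {P : I | d P ≠ 0}.Finite) (hdsum : ∑ᶠ P : I, d P = 0)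
    (φ : I → K) (hφ : ∀ P : I, φ P ≠ 0) (hφv : ∀ P : I, v P (φ P) = d P)
    (f f' : K) (hf : f ≠ 0) (hf' : f' ≠ 0) (hne : f ≠ f')
    (m : I → ℤ)
    (hm : ∀ P : I, m P =
      if 0 ≤ v P (φ P * f) ∧ 0 ≤ v P (φ P * f') then v P (φ P * f - φ P * f')
      else if v P (φ P * f) < 0 ∧ v P (φ P * f') < 0 then
        v P ((φ P * f)⁻¹ - (φ P * f')⁻¹)
      else 0)
    (N : ℕ) (P : Fin N → I) (hP : Function.Injective P)
    (h a : ℕ)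
    (hdegf : (∑ᶠ p : I, max 0 (v p f + d p)) ≤ (h : ℤ))
    (hdegf' : (∑ᶠ p : I, max 0 (v p f' + d p)) ≤ (h : ℤ))
    (ha : a ≤ (Finset.univ.filter fun j : Fin N => 1 ≤ m (P j)).card) :
    2 * (a : ℤ) - 2 * (h : ℤ)
      ≤ ((Finset.univ.filter fun j : Fin N => m (P j) = 1).card : ℤ) := by
  classical
  have hs : f - f' ≠ 0 := sub_ne_zero.mpr hne
  have hA : ∀ p, v p (φ p * f) = v p f + d p := fun p => by
    rw [hmul p _ _ (hφ p) hf, hφv]; ring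
  have hB : ∀ p, v p (φ p * f') = v p f' + d p := fun p => by
    rw [hmul p _ _ (hφ p) hf', hφv]; ring
  have hC : ∀ p, v p (φ p * f - φ p * f') = v p (f - f') + d p := fun p => by
    rw [← mul_sub, hmul p _ _ (hφ p) hs, hφv]; ring
  have key : ∀ p, 0 ≤ m p ∧ m p ≤ (v p (f - f') + d p) - (v p f + d p) - (v p f' + d p)
      + max 0 (v p f + d p) + max 0 (v p f' + d p) := fun p => by
    have := multiplicity_bounds (hmul p) (hadd p) (mul_ne_zero (hφ p) hf)
      (mul_ne_zero (hφ p) hf') (fun e => hne (mul_left_cancel₀ (hφ p) e)) (hm p)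
    rwa [hA, hB, hC] at this
  obtain ⟨fin1, sum1⟩ := hsum f hf
  obtain ⟨fin2, sum2⟩ := hsum f' hf'
  obtain ⟨fin3, sum3⟩ := hsum (f - f') hs
  -- All sums are taken over one finite set of indices, containing every support and every `P j`.
  set S : Finset I := fin1.toFinset ∪ fin2.toFinset ∪ fin3.toFinset ∪ hdfin.toFinset ∪
    Finset.univ.image P with hS
  have hout : ∀ p, p ∉ S → v p f = 0 ∧ v p f' = 0 ∧ v p (f - f') = 0 ∧ d p = 0 := fun p hp => by
    simp only [hS, Finset.mem_union, Set.Finite.mem_toFinset, Set.mem_ofPred_eq, not_or,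
      not_not] at hp
    tauto
  have conv : ∀ g : I → ℤ, (∀ p, p ∉ S → g p = 0) → ∑ᶠ p, g p = ∑ p ∈ S, g p := fun g hg =>
    finsum_eq_sum_of_support_subset g fun p hp => by
      by_contra hn
      exact hp (hg p hn)
  rw [conv _ fun p hp => (hout p hp).1] at sum1
  rw [conv _ fun p hp => (hout p hp).2.1] at sum2
  rw [conv _ fun p hp => (hout p hp).2.2.1] at sum3
  rw [conv _ fun p hp => (hout p hp).2.2.2] at hdsum
  rw [conv _ fun p hp => by obtain ⟨h1, -, -, h4⟩ := hout p hp; simp [h1, h4]] at hdegf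
  rw [conv _ fun p hp => by obtain ⟨-, h2, -, h4⟩ := hout p hp; simp [h2, h4]] at hdegf'
  have total : ∑ p ∈ S, m p ≤ 2 * h := by
    have := Finset.sum_le_sum fun p (_ : p ∈ S) => (key p).2
    simp only [Finset.sum_add_distrib, Finset.sum_sub_distrib] at this
    linarith
  have part : ∑ j, m (P j) ≤ ∑ p ∈ S, m p := by
    rw [← Finset.sum_image (s := Finset.univ) (g := P) (f := m) hP.injOn]
    exact Finset.sum_le_sum_of_subset_of_nonneg Finset.subset_union_right
      fun p _ _ => (key p).1
  have count : 2 * ((Finset.univ.filter fun j : Fin N => 1 ≤ m (P j)).card : ℤ)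
      - ((Finset.univ.filter fun j : Fin N => m (P j) = 1).card : ℤ) ≤ ∑ j, m (P j) := by
    rw [Finset.card_filter, Finset.card_filter]
    push_cast
    rw [Finset.mul_sum, ← Finset.sum_sub_distrib]
    refine Finset.sum_le_sum fun j _ => ?_
    have := (key (P j)).1
    split_ifs <;> omega
  have : (a : ℤ) ≤ ((Finset.univ.filter fun j : Fin N => 1 ≤ m (P j)).card : ℤ) := by
    exact_mod_cast ha
  linarith
end

section
/- Let N, m, Δ be natural numbers, let I_0, I_1, …, I_m be subsets of {1, …, N}, and let t_0, …, t_{m−1} be natural numbers. Suppose that |I_r| ≥ N − 2t_r for each r = 0, 1, …, m−1, and that Σ_{s=0}^{m} |I_0 ∩ I_1 ∩ ⋯ ∩ I_s| ≤ Δ. Then |I_m| ≤ Δ + 2·Σ_{r=0}^{m−1} (m+1−r)·t_r − m·N (as an inequality of integers). -/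
/-!
Write `A s = I 0 ∩ ⋯ ∩ I s`. A point of `I s` outside `A s` is missed by some `I r` with `r < s`,
and each such `I r` misses at most `2 t r` points, so `|I s| ≤ |A s| + 2 ∑_{r < s} t r`
(`card_le_card_inter_add`). Summing over `s = 0, …, m`, each `t r` is counted once for every
`s > r`, that is `m - r` times, which gives `∑ |I s| ≤ Δ + 2 ∑_{r<m} (m - r) t r`. Bounding
`|I r| ≥ N - 2 t r` for `r < m` on the left raises the coefficient of `t r` to `m + 1 - r` and
leaves the claimed bound on `|I m|`.
-/

lemma card_le_card_inter_add (N m : ℕ) (I : Fin (m + 1) → Finset (Fin N)) (t : Fin m → ℕ)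
    (hI : ∀ r : Fin m, (N : ℤ) - 2 * (t r : ℤ) ≤ ((I r.castSucc).card : ℤ)) (s : Fin (m + 1)) :
    (I s).card ≤ (Finset.univ.filter fun j : Fin N => ∀ r ≤ s, j ∈ I r).card
      + ∑ r : Fin m, if r.castSucc < s then 2 * t r else 0 := by
  classical
  have hsub : I s ⊆ (Finset.univ.filter fun j : Fin N => ∀ r ≤ s, j ∈ I r) ∪
      (Finset.univ.filter fun r : Fin m => r.castSucc < s).biUnion
        fun r => (I r.castSucc)ᶜ := by
    intro j hj
    by_cases h : ∀ r ≤ s, j ∈ I r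
    · exact Finset.mem_union_left _ (by simpa using h)
    · push Not at h
      obtain ⟨r, hrs, hjr⟩ := h
      have hlt : r < s := lt_of_le_of_ne hrs (by rintro rfl; exact hjr hj)
      have hne : r ≠ Fin.last m := (hlt.trans_le (Fin.le_last s)).ne
      refine Finset.mem_union_right _ (Finset.mem_biUnion.2 ⟨r.castPred hne, ?_, ?_⟩)
      · simpa using hlt
      · simpa using hjr
  refine (Finset.card_le_card hsub).trans ((Finset.card_union_le _ _).trans ?_)
  refine Nat.add_le_add_left (Finset.card_biUnion_le.trans ?_) _
  rw [← Finset.sum_filter]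
  refine Finset.sum_le_sum fun r _ => ?_
  have h := hI r
  rw [Finset.card_compl, Fintype.card_fin]
  omega

/-- Let `I 0, …, I m` be subsets of `{1, …, N}` and
`t 0, …, t (m-1)` natural numbers.  If `|I r| ≥ N - 2 t r` for `r < m`, and
`∑_{s=0}^{m} |I 0 ∩ ⋯ ∩ I s| ≤ Δ`, then
`|I m| ≤ Δ + 2 ∑_{r<m} (m+1-r) t r - m N` (as integers). -/
theorem stmt_5 (N m Δ : ℕ) (I : Fin (m + 1) → Finset (Fin N)) (t : Fin m → ℕ)
    (hI : ∀ r : Fin m, (N : ℤ) - 2 * (t r : ℤ) ≤ ((I r.castSucc).card : ℤ))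
    (hcap : ∑ s : Fin (m + 1),
        (Finset.univ.filter fun j : Fin N => ∀ r ≤ s, j ∈ I r).card ≤ Δ) :
    ((I (Fin.last m)).card : ℤ)
      ≤ (Δ : ℤ) + 2 * ∑ r : Fin m, ((m + 1 - (r : ℕ) : ℕ) : ℤ) * (t r : ℤ)
        - (m : ℤ) * (N : ℤ) := by
  have hcount : ∑ s : Fin (m + 1), ∑ r : Fin m, (if r.castSucc < s then 2 * t r else 0)
      = ∑ r : Fin m, (m - (r : ℕ)) * (2 * t r) := by
    rw [Finset.sum_comm]
    refine Finset.sum_congr rfl fun r _ => ?_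
    rw [← Finset.sum_filter, Finset.sum_const, Finset.filter_lt_eq_Ioi, Fin.card_Ioi]
    simp
  have hsum := Finset.sum_le_sum fun s (_ : s ∈ Finset.univ) => card_le_card_inter_add N m I t hI s
  rw [Finset.sum_add_distrib, hcount, Fin.sum_univ_castSucc] at hsum
  have hsum' : ∑ r : Fin m, ((I r.castSucc).card : ℤ) + ((I (Fin.last m)).card : ℤ)
      ≤ Δ + ∑ r : Fin m, ((m - (r : ℕ) : ℕ) : ℤ) * (2 * (t r : ℤ)) := by
    exact_mod_cast hsum.trans (Nat.add_le_add_right hcap _)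
  have hlow := Finset.sum_le_sum fun r (_ : r ∈ Finset.univ) => hI r
  rw [Finset.sum_sub_distrib] at hlow
  simp only [Finset.sum_const, Finset.card_univ, Fintype.card_fin, nsmul_eq_mul] at hlow
  have hcoef : 2 * ∑ r : Fin m, ((m + 1 - (r : ℕ) : ℕ) : ℤ) * (t r : ℤ)
      = ∑ r : Fin m, ((m - (r : ℕ) : ℕ) : ℤ) * (2 * (t r : ℤ)) + ∑ r : Fin m, 2 * (t r : ℤ) := by
    rw [Finset.mul_sum, ← Finset.sum_add_distrib]
    refine Finset.sum_congr rfl fun r _ => ?_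
    rw [Nat.succ_sub r.is_lt.le]
    push_cast
    ring
  linarith
end

section
/- Let A be a type, S a finite set, N and m positive integers, and let φ_0, φ_1, …, φ_m : S → (Fin N → A) be maps. Let Δ be a natural number, and assume that for all distinct f, f' ∈ S one has Σ_{s=0}^{m} |{ j : φ_r(f)(j) = φ_r(f')(j) for all r = 0, …, s }| ≤ Δ. Let t_0, …, t_{m−1} be natural numbers, let c_0, …, c_{m−1} ∈ (Fin N → A), and let M = { f ∈ S : hammingDist(c_r, φ_r(f)) ≤ t_r for all r = 0, …, m−1 }. Then for all distinct f, f' ∈ M, the Hamming distance between φ_m(f) and φ_m(f') is at least (m+1)·N − 2·Σ_{r=0}^{m−1} (m+1−r)·t_r − Δ. In particular, if Δ < (m+1)·N − 2·Σ_{r=0}^{m−1} (m+1−r)·t_r, then φ_m is injective on M. -/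
/-!
Fix distinct `f, f' ∈ M` and write `d r` for the Hamming distance between `φ r f` and `φ r f'`.
For every `s`, a coordinate on which some `φ r` with `r ≤ s` disagrees is counted by one of the
`d r`, so the union bound gives `N ≤ |{j : φ r f j = φ r f' j for all r ≤ s}| + ∑_{r ≤ s} d r`.
Summing over `s = 0, …, m`, each `d r` occurs `m + 1 - r` times, whence
`(m + 1) N ≤ Δ + ∑_{r ≤ m} (m + 1 - r) d r`. For `r < m` the triangle inequality through `c r`
gives `d r ≤ 2 t r`, and the remaining term `r = m` is `d m` with coefficient one.
-/

/-- Union bound: a coordinate is either one of common agreement for all indices `r ≤ s`, or is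
counted by the Hamming distance at some index `r ≤ s`. -/
theorem card_le_agree_add_sum {A : Type*} [DecidableEq A] {N k : ℕ}
    (x y : Fin k → Fin N → A) (s : Fin k) :
    N ≤ (Finset.univ.filter fun j : Fin N => ∀ r ≤ s, x r j = y r j).card
      + ∑ r ∈ Finset.Iic s, hammingDist (x r) (y r) := by
  classical
  have hcompl : (Finset.univ.filter fun j : Fin N => ¬ ∀ r ≤ s, x r j = y r j).card
      ≤ ∑ r ∈ Finset.Iic s, hammingDist (x r) (y r) := by
    refine le_trans (Finset.card_le_card ?_)
      (Finset.card_biUnion_le (s := Finset.Iic s)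
        (t := fun r => Finset.univ.filter fun j : Fin N => x r j ≠ y r j))
    intro j hj
    simpa using hj
  have hsplit := Finset.card_filter_add_card_filter_not (s := (Finset.univ : Finset (Fin N)))
    (fun j : Fin N => ∀ r ≤ s, x r j = y r j)
  rw [Finset.card_univ, Fintype.card_fin] at hsplit
  omega

theorem sum_sum_Iic_eq {m : ℕ} (d : Fin (m + 1) → ℕ) :
    ∑ s, ∑ r ∈ Finset.Iic s, d r = ∑ r : Fin (m + 1), (m + 1 - (r : ℕ)) * d r := by
  rw [Finset.sum_comm' (t' := Finset.univ) (s' := fun r => Finset.Ici r) (by simp)]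
  simp

/-- Let `φ 0, …, φ m : S → (Fin N → A)` be maps such that for
all distinct `f, f' ∈ S` the total multiplicity of coordinate agreements
`∑_{s=0}^{m} |{j : φ r f j = φ r f' j for all r ≤ s}|` is at most `Δ`.  Let
`M ⊆ S` be the set of `f` with `hammingDist (c r) (φ r f) ≤ t r` for all
`r < m`.  Then distinct elements of `M` have `φ m`-images at Hamming distance
at least `(m+1) N - 2 ∑_{r<m} (m+1-r) t r - Δ`; in particular, if
`Δ < (m+1) N - 2 ∑_{r<m} (m+1-r) t r`, then `φ m` is injective on `M`. -/
theorem stmt_6 {A : Type*} [DecidableEq A] {F : Type*} [DecidableEq F]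
    (S : Finset F) (N m : ℕ) (hN : 0 < N) (hm : 0 < m)
    (φ : Fin (m + 1) → F → Fin N → A) (Δ : ℕ)
    (hΔ : ∀ f ∈ S, ∀ f' ∈ S, f ≠ f' →
      ∑ s : Fin (m + 1),
        (Finset.univ.filter fun j : Fin N => ∀ r ≤ s, φ r f j = φ r f' j).card ≤ Δ)
    (t : Fin m → ℕ) (c : Fin m → Fin N → A)
    (M : Finset F)
    (hM : M = S.filter fun f => ∀ r : Fin m, hammingDist (c r) (φ r.castSucc f) ≤ t r) :
    (∀ f ∈ M, ∀ f' ∈ M, f ≠ f' →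
        ((m : ℤ) + 1) * (N : ℤ) - 2 * ∑ r : Fin m, ((m + 1 - (r : ℕ) : ℕ) : ℤ) * (t r : ℤ)
            - (Δ : ℤ)
          ≤ (hammingDist (φ (Fin.last m) f) (φ (Fin.last m) f') : ℤ)) ∧
      ((Δ : ℤ) < ((m : ℤ) + 1) * (N : ℤ)
          - 2 * ∑ r : Fin m, ((m + 1 - (r : ℕ) : ℕ) : ℤ) * (t r : ℤ) →
        Set.InjOn (φ (Fin.last m)) ↑M) := by
  have key : ∀ f ∈ M, ∀ f' ∈ M, f ≠ f' →
      (m + 1) * N ≤ Δ + 2 * ∑ r : Fin m, (m + 1 - (r : ℕ)) * t r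
        + hammingDist (φ (Fin.last m) f) (φ (Fin.last m) f') := by
    intro f hf f' hf' hne
    rw [hM, Finset.mem_filter] at hf hf'
    have hsum := Finset.sum_le_sum fun (s : Fin (m + 1)) (_ : s ∈ Finset.univ) =>
      card_le_agree_add_sum (fun r => φ r f) (fun r => φ r f') s
    rw [Finset.sum_add_distrib, sum_sum_Iic_eq, Fin.sum_univ_castSucc (n := m) (f := fun r : Fin (m + 1) =>
      (m + 1 - (r : ℕ)) * hammingDist (φ r f) (φ r f'))] at hsum
    have hagree := hΔ f hf.1 f' hf'.1 hne
    have htri : ∑ r : Fin m, (m + 1 - (r : ℕ)) * hammingDist (φ r.castSucc f) (φ r.castSucc f')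
        ≤ 2 * ∑ r : Fin m, (m + 1 - (r : ℕ)) * t r := by
      rw [Finset.mul_sum]
      refine Finset.sum_le_sum fun r _ => ?_
      have h1 := hammingDist_triangle_left (φ r.castSucc f) (φ r.castSucc f') (c r)
      have h2 : hammingDist (φ r.castSucc f) (φ r.castSucc f') ≤ 2 * t r := by
        have := hf.2 r
        have := hf'.2 r
        omega
      calc _ ≤ (m + 1 - (r : ℕ)) * (2 * t r) := Nat.mul_le_mul_left _ h2
        _ = _ := by ring
    simp only [Finset.sum_const, Finset.card_univ, Fintype.card_fin, smul_eq_mul,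
      Fin.val_castSucc, Fin.val_last, Nat.add_sub_cancel_left, one_mul] at hsum
    omega
  have bound : ∀ f ∈ M, ∀ f' ∈ M, f ≠ f' →
      ((m : ℤ) + 1) * (N : ℤ) - 2 * ∑ r : Fin m, ((m + 1 - (r : ℕ) : ℕ) : ℤ) * (t r : ℤ)
          - (Δ : ℤ)
        ≤ (hammingDist (φ (Fin.last m) f) (φ (Fin.last m) f') : ℤ) := by
    intro f hf f' hf' hne
    have h : (((m + 1) * N : ℕ) : ℤ) ≤ ((Δ + 2 * ∑ r : Fin m, (m + 1 - (r : ℕ)) * t r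
        + hammingDist (φ (Fin.last m) f) (φ (Fin.last m) f') : ℕ) : ℤ) :=
      Int.ofNat_le.mpr (key f hf f' hf' hne)
    simp only [Nat.cast_add, Nat.cast_mul, Nat.cast_sum, Nat.cast_one, Nat.cast_ofNat] at h
    linarith
  refine ⟨bound, fun hlt f hf f' hf' heq => ?_⟩
  by_contra hne
  have h := bound f hf f' hf' hne
  rw [heq, hammingDist_self] at h
  push_cast at h hlt
  linarith
end

section
/- Let A be a nonempty finite type with |A| = Q, let N and m be positive integers, let S be a finite set, let φ_0, …, φ_{m−1} : S → (Fin N → A) be arbitrary maps, and let t_0, …, t_{m−1} be natural numbers. Then there exist words c_0, …, c_{m−1} ∈ (Fin N → A) such that |{ f ∈ S : hammingDist(c_r, φ_r(f)) ≤ t_r for all r = 0, …, m−1 }| · Q^{m·N} ≥ |S| · Π_{r=0}^{m−1} V(t_r), where V(t) = Σ_{i=0}^{min(t,N)} C(N, i)·(Q − 1)^i is the cardinality of a closed Hamming ball of radius t in (Fin N → A). -/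
/-!
The proof averages over all `Q ^ (m * N)` tuples of centers. Double counting pairs `(c, f)` with
`f` in the filtered set of `c` turns the sum of the filtered cardinalities into a sum over `f ∈ S`
of the number of tuples `c` with each `c r` in the Hamming ball of radius `t r` about `φ r f`.
That number is a product of ball volumes, which do not depend on the ball centers
(`card_hamming_ball`), so some tuple does at least as well as the average.
-/

/-- A word at distance `i` from `x` is given by the `i`-element set of coordinates where it
disagrees with `x`, together with one of the `|A| - 1` other letters at each of them. -/
lemma card_hamming_sphere {A : Type*} [Fintype A] [DecidableEq A] {N : ℕ} (x : Fin N → A)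
    (i : ℕ) :
    (Finset.univ.filter fun c : Fin N → A => hammingDist c x = i).card
      = N.choose i * (Fintype.card A - 1) ^ i := by
  classical
  have hmaps : ∀ c ∈ Finset.univ.filter (fun c : Fin N → A => hammingDist c x = i),
      (Finset.univ.filter fun j => c j ≠ x j) ∈
        Finset.powersetCard i (Finset.univ : Finset (Fin N)) := by
    intro c hc
    rw [Finset.mem_powersetCard]
    exact ⟨Finset.subset_univ _, (Finset.mem_filter.1 hc).2⟩
  rw [Finset.card_eq_sum_card_fiberwise hmaps]
  have hfib : ∀ s ∈ Finset.powersetCard i (Finset.univ : Finset (Fin N)),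
      ((Finset.univ.filter fun c : Fin N → A => hammingDist c x = i).filter
        fun c => (Finset.univ.filter fun j => c j ≠ x j) = s).card
        = (Fintype.card A - 1) ^ i := by
    intro s hs
    have hsc := (Finset.mem_powersetCard.1 hs).2
    have heq : ((Finset.univ.filter fun c : Fin N → A => hammingDist c x = i).filter
        fun c => (Finset.univ.filter fun j => c j ≠ x j) = s)
        = Fintype.piFinset fun j => if j ∈ s then Finset.univ.erase (x j) else {x j} := by
      ext c
      simp only [Finset.mem_filter, Finset.mem_univ, true_and, Fintype.mem_piFinset]
      constructor
      · rintro ⟨-, rfl⟩ j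
        by_cases h : c j = x j <;> simp [h]
      · intro h
        have h2 : (Finset.univ.filter fun j => c j ≠ x j) = s := by
          ext j
          have := h j
          by_cases hj : j ∈ s <;> simp_all
        exact ⟨by rw [← hsc, ← h2]; rfl, h2⟩
    rw [heq, Fintype.card_piFinset, ← hsc]
    simp [apply_ite Finset.card]
  rw [Finset.sum_congr rfl hfib]
  simp

lemma card_hamming_ball {A : Type*} [Fintype A] [DecidableEq A] {N : ℕ} (x : Fin N → A)
    (t : ℕ) :
    (Finset.univ.filter fun c : Fin N → A => hammingDist c x ≤ t).card
      = ∑ i ∈ Finset.range (min t N + 1), N.choose i * (Fintype.card A - 1) ^ i := by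
  have hmaps : ∀ c ∈ Finset.univ.filter (fun c : Fin N → A => hammingDist c x ≤ t),
      hammingDist c x ∈ Finset.range (min t N + 1) := by
    intro c hc
    have h1 := (Finset.mem_filter.1 hc).2
    have h2 : hammingDist c x ≤ Fintype.card (Fin N) := hammingDist_le_card_fintype
    rw [Fintype.card_fin] at h2
    rw [Finset.mem_range]
    omega
  rw [Finset.card_eq_sum_card_fiberwise hmaps]
  refine Finset.sum_congr rfl fun i hi => ?_
  rw [← card_hamming_sphere x i, Finset.filter_filter]
  congr 1
  ext c
  rw [Finset.mem_range] at hi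
  simp only [Finset.mem_filter, Finset.mem_univ, true_and]
  omega

/-- Averaging over all choices of centers `c 0, …, c (m-1)`,
there exist words `c r ∈ Fin N → A` such that the set of `f ∈ S` with
`hammingDist (c r) (φ r f) ≤ t r` for all `r` has size at least
`|S| ∏ r V(t r) / Q^(m N)`, where `V(t)` is the size of a closed Hamming ball
of radius `t`. -/
theorem stmt_7 {A : Type*} [Fintype A] [Nonempty A] [DecidableEq A]
    (Q : ℕ) (hQ : Fintype.card A = Q)
    (N m : ℕ) (hN : 0 < N) (hm : 0 < m)
    {F : Type*} [DecidableEq F] (S : Finset F)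
    (φ : Fin m → F → Fin N → A) (t : Fin m → ℕ) :
    ∃ c : Fin m → Fin N → A,
      (S.filter fun f => ∀ r : Fin m, hammingDist (c r) (φ r f) ≤ t r).card
            * Q ^ (m * N)
        ≥ S.card *
            ∏ r : Fin m,
              ∑ i ∈ Finset.range (min (t r) N + 1), N.choose i * (Q - 1) ^ i := by
  classical
  subst hQ
  have hballs : ∀ f : F,
      (Finset.univ.filter fun c : Fin m → Fin N → A =>
        ∀ r, hammingDist (c r) (φ r f) ≤ t r).card
      = ∏ r : Fin m, ∑ i ∈ Finset.range (min (t r) N + 1),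
          N.choose i * (Fintype.card A - 1) ^ i := by
    intro f
    have heq : (Finset.univ.filter fun c : Fin m → Fin N → A =>
        ∀ r, hammingDist (c r) (φ r f) ≤ t r)
        = Fintype.piFinset fun r =>
          Finset.univ.filter fun c : Fin N → A => hammingDist c (φ r f) ≤ t r := by
      ext c
      simp
    rw [heq, Fintype.card_piFinset]
    exact Finset.prod_congr rfl fun r _ => card_hamming_ball _ _
  have hdouble : ∑ c : Fin m → Fin N → A,
      (S.filter fun f => ∀ r : Fin m, hammingDist (c r) (φ r f) ≤ t r).card
      = S.card * ∏ r : Fin m, ∑ i ∈ Finset.range (min (t r) N + 1),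
          N.choose i * (Fintype.card A - 1) ^ i := by
    simp_rw [Finset.card_filter]
    rw [Finset.sum_comm]
    simp_rw [← Finset.card_filter, hballs]
    rw [Finset.sum_const, smul_eq_mul]
  have hcard : Fintype.card (Fin m → Fin N → A) = Fintype.card A ^ (m * N) := by
    simp [← pow_mul, mul_comm]
  -- There are `Q ^ (m * N)` tuples, so the two functions below have equal sums over all tuples.
  obtain ⟨c, -, hc⟩ := Finset.exists_le_of_sum_le
    (s := (Finset.univ : Finset (Fin m → Fin N → A)))
    (f := fun _ => S.card * ∏ r : Fin m, ∑ i ∈ Finset.range (min (t r) N + 1),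
          N.choose i * (Fintype.card A - 1) ^ i)
    (g := fun c => (S.filter fun f => ∀ r : Fin m, hammingDist (c r) (φ r f) ≤ t r).card
      * Fintype.card A ^ (m * N))
    Finset.univ_nonempty
    (by
      rw [Finset.sum_const, Finset.card_univ, hcard, smul_eq_mul, ← Finset.sum_mul, hdouble,
        mul_comm])
  exact ⟨c, hc⟩
end

section
/- Let q ≥ 2 and i ≥ 1 be integers, and set σ* = (q−1)/(q^{2i} + q − 1). Then 0 < σ* < (q−1)/q, the value H_q(σ*) − 2i·σ* equals log_q(1 + (q−1)/q^{2i}), and for every real σ with 0 ≤ σ ≤ (q−1)/q one has H_q(σ) − 2i·σ ≤ log_q(1 + (q−1)/q^{2i}). -/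
/-!
Put `a = (q - 1) / q ^ (2 * i) > 0`. In natural logarithms, `H_q(σ) - 2iσ` is
`(σ log a - σ log σ - (1 - σ) log (1 - σ)) / log q` (`qaryEntropy_sub_eq`), and
`σ* = a / (1 + a)`, so that `log a = log σ* - log (1 - σ*)` and
`log (1 + a) = -log (1 - σ*)`. The upper bound `log (1 + a)` for the numerator is therefore
Gibbs' inequality for the distributions `(σ, 1 - σ)` and `(σ*, 1 - σ*)`, which follows from
`log x ≤ x - 1`; the two distributions coincide at `σ = σ*`, which gives the value there.
-/


/-- The `q`-ary entropy function `H_q(δ)` (with the conventions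
`Real.log 0 = 0`, so the formula is also correct at `δ = 0`). -/
noncomputable def qaryEntropy (q : ℕ) (δ : ℝ) : ℝ :=
  δ * Real.logb q ((q : ℝ) - 1) - δ * Real.logb q δ - (1 - δ) * Real.logb q (1 - δ)

/-- One term of Gibbs' inequality; the case `x = 0` relies on `0 * log 0 = 0`. -/
lemma mul_log_sub_mul_log_le {x b : ℝ} (hx : 0 ≤ x) (hb : 0 < b) :
    x * Real.log b - x * Real.log x ≤ b - x := by
  rcases hx.eq_or_lt with rfl | hx
  · simpa using hb.le
  · have h := mul_le_mul_of_nonneg_left (Real.log_le_sub_one_of_pos (div_pos hb hx)) hx.le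
    rw [Real.log_div hb.ne' hx.ne'] at h
    have hbx : x * (b / x - 1) = b - x := by field_simp
    linarith

lemma log_div_one_add {a : ℝ} (ha : 0 < a) :
    Real.log (a / (1 + a)) = Real.log a - Real.log (1 + a) :=
  Real.log_div ha.ne' (by positivity)

lemma log_one_sub_div_one_add {a : ℝ} (ha : 0 < a) :
    Real.log (1 - a / (1 + a)) = -Real.log (1 + a) := by
  rw [← Real.log_inv]
  congr 1
  field_simp
  ring

/-- The convex conjugate of the (negative) binary entropy, evaluated at `log a`, is at most
`log (1 + a)`. -/
lemma entropy_add_mul_log_le {a σ : ℝ} (ha : 0 < a) (h0 : 0 ≤ σ) (h1 : σ ≤ 1) :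
    σ * Real.log a - σ * Real.log σ - (1 - σ) * Real.log (1 - σ) ≤ Real.log (1 + a) := by
  have hs : 0 < 1 - a / (1 + a) := by
    rw [sub_pos, div_lt_one (by positivity)]
    linarith
  have e1 := mul_log_sub_mul_log_le h0 (show 0 < a / (1 + a) by positivity)
  have e2 := mul_log_sub_mul_log_le (sub_nonneg.2 h1) hs
  rw [log_div_one_add ha] at e1
  rw [log_one_sub_div_one_add ha] at e2
  linarith

/-- The bound of `entropy_add_mul_log_le` is attained at `σ = a / (1 + a)`. -/
lemma entropy_add_mul_log_eq {a : ℝ} (ha : 0 < a) :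
    a / (1 + a) * Real.log a - a / (1 + a) * Real.log (a / (1 + a))
      - (1 - a / (1 + a)) * Real.log (1 - a / (1 + a)) = Real.log (1 + a) := by
  rw [log_div_one_add ha, log_one_sub_div_one_add ha]
  ring

/-- The linear term `2iσ` is absorbed into `σ log a`, because `2i = log (q ^ (2i)) / log q`. -/
lemma qaryEntropy_sub_eq {q : ℕ} (i : ℕ) (hq : 2 ≤ q) (σ : ℝ) :
    qaryEntropy q σ - 2 * (i : ℝ) * σ =
      (σ * Real.log (((q : ℝ) - 1) / (q : ℝ) ^ (2 * i)) - σ * Real.log σ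
        - (1 - σ) * Real.log (1 - σ)) / Real.log q := by
  have hq' : (2 : ℝ) ≤ q := by exact_mod_cast hq
  have hlog : Real.log q ≠ 0 := (Real.log_pos (by linarith)).ne'
  rw [Real.log_div (by linarith) (by positivity), Real.log_pow]
  simp only [qaryEntropy, Real.logb]
  push_cast
  field_simp
  ring

/-- For integers `q ≥ 2`, `i ≥ 1`, the value
`σ* = (q-1)/(q^(2i) + q - 1)` lies in `(0, (q-1)/q)`, satisfies
`H_q(σ*) - 2iσ* = log_q (1 + (q-1)/q^(2i))`, and maximizes `H_q(σ) - 2iσ`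
over `σ ∈ [0, (q-1)/q]`. -/
theorem stmt_9 (q i : ℕ) (hq : 2 ≤ q) (hi : 1 ≤ i) :
    (0 < ((q : ℝ) - 1) / ((q : ℝ) ^ (2 * i) + (q : ℝ) - 1) ∧
      ((q : ℝ) - 1) / ((q : ℝ) ^ (2 * i) + (q : ℝ) - 1) < ((q : ℝ) - 1) / (q : ℝ)) ∧
    qaryEntropy q (((q : ℝ) - 1) / ((q : ℝ) ^ (2 * i) + (q : ℝ) - 1))
        - 2 * (i : ℝ) * (((q : ℝ) - 1) / ((q : ℝ) ^ (2 * i) + (q : ℝ) - 1))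
      = Real.logb q (1 + ((q : ℝ) - 1) / (q : ℝ) ^ (2 * i)) ∧
    ∀ σ : ℝ, 0 ≤ σ → σ ≤ ((q : ℝ) - 1) / (q : ℝ) →
      qaryEntropy q σ - 2 * (i : ℝ) * σ
        ≤ Real.logb q (1 + ((q : ℝ) - 1) / (q : ℝ) ^ (2 * i)) := by
  have hq' : (2 : ℝ) ≤ q := by exact_mod_cast hq
  have hlog : 0 < Real.log q := Real.log_pos (by linarith)
  have hpow : (q : ℝ) < (q : ℝ) ^ (2 * i) :=
    lt_self_pow₀ (by linarith) (by omega)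
  have ha : 0 < ((q : ℝ) - 1) / (q : ℝ) ^ (2 * i) := div_pos (by linarith) (by linarith)
  have hstar : ((q : ℝ) - 1) / ((q : ℝ) ^ (2 * i) + (q : ℝ) - 1) =
      ((q : ℝ) - 1) / (q : ℝ) ^ (2 * i) / (1 + ((q : ℝ) - 1) / (q : ℝ) ^ (2 * i)) := by
    have h1 : (q : ℝ) ^ (2 * i) ≠ 0 := by positivity
    rw [one_add_div h1, div_div_div_cancel_right₀ h1, add_sub_assoc]
  refine ⟨⟨div_pos (by linarith) (by linarith),
    div_lt_div_of_pos_left (by linarith) (by linarith) (by linarith)⟩, ?_, ?_⟩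
  · rw [qaryEntropy_sub_eq i hq, hstar, entropy_add_mul_log_eq ha, Real.logb]
  · intro σ h0 h1
    have hσ : σ ≤ 1 := h1.trans ((div_le_one (by linarith)).2 (by linarith))
    rw [qaryEntropy_sub_eq i hq, Real.logb]
    exact div_le_div_of_nonneg_right (entropy_add_mul_log_le ha h0 hσ) hlog.le
end

section
/- For every integer q ≥ 2, the series Σ_{i=2}^{∞} ln(1 + (q−1)/q^{2i}) converges and its sum S satisfies | S − (q−1)/q⁴ | ≤ 1/q⁵. -/
/-!
Write `a n = (q-1)/q^(2(n+2))`. Since `0 ≤ log (1 + a n) ≤ a n` and `a` is geometric with ratio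
`q⁻²`, the series converges and its sum `S` is at most `1/(q²(q+1)) = a 0 + 1/(q⁴(q+1))`,
which gives the upper bound. For the lower bound the first term suffices:
`S ≥ log (1 + a 0) ≥ a 0 - (a 0)²` and `a 0 ≤ q⁻³`, so `(a 0)² ≤ q⁻⁶ ≤ q⁻⁵`.
-/

/-- The majorant series is geometric; its sum is split off as first term plus tail. -/
lemma hasSum_majorant (x : ℝ) (hx : 2 ≤ x) :
    HasSum (fun n : ℕ => (x - 1) / x ^ (2 * (n + 2)))
      ((x - 1) / x ^ 4 + 1 / (x ^ 4 * (x + 1))) := by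
  have hx0 : x ≠ 0 := by positivity
  have hx1 : x + 1 ≠ 0 := by positivity
  have hsq : x ^ 2 - 1 ≠ 0 := by nlinarith
  have h1 : (x ^ 2)⁻¹ < 1 := inv_lt_one_of_one_lt₀ (by nlinarith)
  have h := (hasSum_geometric_of_lt_one (by positivity) h1).mul_left ((x - 1) / x ^ 4)
  have hr : 1 - (x ^ 2)⁻¹ = (x ^ 2 - 1) / x ^ 2 := by field_simp
  have hf : (fun n : ℕ => (x - 1) / x ^ (2 * (n + 2)))
      = fun n => (x - 1) / x ^ 4 * ((x ^ 2)⁻¹) ^ n := by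
    funext n
    rw [inv_pow, ← pow_mul, mul_add, pow_add]
    field_simp
    ring
  have hs : (x - 1) / x ^ 4 + 1 / (x ^ 4 * (x + 1))
      = (x - 1) / x ^ 4 * (1 - (x ^ 2)⁻¹)⁻¹ := by
    rw [hr, inv_div]
    field_simp
    ring
  rw [hf, hs]
  exact h

lemma sub_sq_le_log_one_add {a : ℝ} (ha : 0 ≤ a) : a - a ^ 2 ≤ Real.log (1 + a) := by
  have h := Real.one_sub_inv_le_log_of_pos (show 0 < 1 + a by positivity)
  have h2 : 1 - (1 + a)⁻¹ = a - a ^ 2 + a ^ 3 / (1 + a) := by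
    field_simp
    ring
  have h3 : 0 ≤ a ^ 3 / (1 + a) := by positivity
  linarith

/-- For every integer `q ≥ 2`, the series
`∑_{i=2}^{∞} ln (1 + (q-1)/q^(2i))` converges and its sum `S` satisfies
`|S - (q-1)/q⁴| ≤ 1/q⁵`.  (The sum over `i ≥ 2` is written as a sum over
`n : ℕ` with `i = n + 2`.) -/
theorem stmt_12 (q : ℕ) (hq : 2 ≤ q) :
    Summable (fun n : ℕ => Real.log (1 + ((q : ℝ) - 1) / (q : ℝ) ^ (2 * (n + 2)))) ∧
    |(∑' n : ℕ, Real.log (1 + ((q : ℝ) - 1) / (q : ℝ) ^ (2 * (n + 2))))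
        - ((q : ℝ) - 1) / (q : ℝ) ^ 4| ≤ 1 / (q : ℝ) ^ 5 := by
  have hx : (2 : ℝ) ≤ q := by exact_mod_cast hq
  generalize (q : ℝ) = x at hx ⊢
  have hx1 : 0 ≤ x - 1 := by linarith
  have hxpos : 0 < x := by linarith
  have ha : ∀ n : ℕ, 0 ≤ (x - 1) / x ^ (2 * (n + 2)) := fun n => by positivity
  have hnn : ∀ n : ℕ, 0 ≤ Real.log (1 + (x - 1) / x ^ (2 * (n + 2))) := fun n =>
    Real.log_nonneg (by linarith [ha n])
  have hle : ∀ n : ℕ, Real.log (1 + (x - 1) / x ^ (2 * (n + 2)))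
      ≤ (x - 1) / x ^ (2 * (n + 2)) := fun n => by
    have := Real.log_le_sub_one_of_pos (show 0 < 1 + (x - 1) / x ^ (2 * (n + 2)) by
      linarith [ha n])
    linarith
  have hsum := hasSum_majorant x hx
  have hS := Summable.of_nonneg_of_le hnn hle hsum.summable
  refine ⟨hS, ?_⟩
  have hup := hasSum_le hle hS.hasSum hsum
  have hlow := hS.le_tsum 0 (fun n _ => hnn n)
  have hlog := sub_sq_le_log_one_add (ha 0)
  norm_num only at hlow hlog
  have htail : 1 / (x ^ 4 * (x + 1)) ≤ 1 / x ^ 5 :=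
    one_div_le_one_div_of_le (by positivity) (by nlinarith [pow_pos hxpos 4])
  have hsq : ((x - 1) / x ^ 4) ^ 2 ≤ 1 / x ^ 5 := by
    rw [div_pow, div_le_div_iff₀ (by positivity) (by positivity)]
    have h1 : (x - 1) ^ 2 ≤ x ^ 3 := by nlinarith [pow_pos hxpos 2]
    nlinarith [pow_pos hxpos 5]
  rw [abs_le]
  constructor <;> linarith
end
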